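/- arXiv:2105.11105 — 5 statements merged into one kernel-verified Lean document; each statement's English description precedes it below -/
import Mathlib

section
/- Let N, m, m₀, σ₀ be positive integers and let σ be an integer such that N = p·q with p and q prime, gcd(m, N) = 1, 1 ≤ σ ≤ m, gcd(σ, m) = 1, σ₀ ≤ p < (1 + 1/m₀)·σ₀ (as real numbers), and p ≡ σ (mod m). Then there exist integers a, b, not both zero, such that: (i) |a·N/σ₀| ≤ 2·(N·m·m₀)^{1/2} and |b·σ₀ − a·N/σ₀| ≤ 2·(N·m/m₀)^{1/2} as real numbers; (ii) |a·q + b·p − (a·N/σ₀ + b·σ₀)| ≤ 4·N^{1/2}·m^{1/2}/m₀^{3/2} as real numbers; and (iii) a·q + b·p ≡ a·N·σ' + b·σ (mod m²) for any integer σ' with σ·σ' ≡ 1 (mod m²). -/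
/-- Proposition 3.2 (existence content): computation of suitable pairs (a, b). -/
theorem stmt_0
    (N m m₀ σ₀ p q : ℕ) (σ : ℤ)
    (hN : 0 < N) (hm : 0 < m) (hm₀ : 0 < m₀) (hσ₀ : 0 < σ₀)
    (hNpq : N = p * q) (hp : p.Prime) (hq : q.Prime)
    (hgcd : Nat.gcd m N = 1)
    (hσ1 : 1 ≤ σ) (hσm : σ ≤ (m : ℤ))
    (hσcop : IsCoprime σ (m : ℤ))
    (hlow : (σ₀ : ℝ) ≤ (p : ℝ))
    (hhigh : (p : ℝ) < (1 + 1 / (m₀ : ℝ)) * (σ₀ : ℝ))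
    (hcong : Int.ModEq (m : ℤ) (p : ℤ) σ) :
    ∃ a b : ℤ, ¬ (a = 0 ∧ b = 0) ∧
      |(a : ℝ) * N / σ₀| ≤ 2 * Real.sqrt ((N : ℝ) * m * m₀) ∧
      |(b : ℝ) * σ₀ - (a : ℝ) * N / σ₀| ≤ 2 * Real.sqrt ((N : ℝ) * m / m₀) ∧
      |(a : ℝ) * q + (b : ℝ) * p - ((a : ℝ) * N / σ₀ + (b : ℝ) * σ₀)|
        ≤ 4 * Real.sqrt N * Real.sqrt m / (m₀ : ℝ) ^ ((3 : ℝ) / 2) ∧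
      ∀ σ' : ℤ, Int.ModEq ((m : ℤ) ^ 2) (σ * σ') 1 →
        Int.ModEq ((m : ℤ) ^ 2) (a * q + b * p) (a * N * σ' + b * σ) := by
  obtain ⟨s, v, hsv⟩ := hσcop
  have hmR : (0:ℝ) < m := by exact_mod_cast hm
  have hm₀R : (0:ℝ) < m₀ := by exact_mod_cast hm₀
  have hNR : (0:ℝ) < N := by exact_mod_cast hN
  have hσ₀R : (0:ℝ) < σ₀ := by exact_mod_cast hσ₀
  set A := Real.sqrt ((N : ℝ) * m * m₀) with hA
  set B := Real.sqrt ((N : ℝ) * m / m₀) with hB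
  have hA0 : 0 < A := by positivity
  have hB0 : 0 < B := by positivity
  have hAB : A * B = N * m := by
    rw [hA, hB, ← Real.sqrt_mul (by positivity)]
    rw [show (N : ℝ) * m * m₀ * (N * m / m₀) = (N * m) ^ 2 by field_simp]
    exact Real.sqrt_sq (by positivity)
  have hABm : A = m₀ * B := by
    rw [hA, hB, show (N : ℝ) * m * m₀ = (m₀:ℝ) ^ 2 * (N * m / m₀) by field_simp,
      Real.sqrt_mul (by positivity), Real.sqrt_sq (by positivity)]
  -- approximation step
  have key : ∃ a d : ℤ, ¬ (a = 0 ∧ d = 0) ∧ |(a : ℝ) * N / σ₀| ≤ 2 * A ∧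
      |((a : ℝ) * (q * s) + m * d) * σ₀ - (a : ℝ) * N / σ₀| ≤ 2 * B := by
    by_cases hX : 1 ≤ A * σ₀ / N
    · set n := ⌊A * σ₀ / N⌋₊ with hn
      have hn0 : 0 < n := Nat.floor_pos.mpr hX
      have hnle : (n : ℝ) ≤ A * σ₀ / N := Nat.floor_le (by positivity)
      have hnlt : A * σ₀ / N < n + 1 := Nat.lt_floor_add_one _
      obtain ⟨j, k, hk0, hkn, hjk⟩ := Real.exists_int_int_abs_mul_sub_le
        (((q * s : ℝ) * σ₀ - N / σ₀) / (m * σ₀)) hn0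
      refine ⟨k, -j, fun h => hk0.ne' h.1, ?_, ?_⟩
      · have hkR : (k : ℝ) ≤ n := by exact_mod_cast hkn
        have hk0R : (0:ℝ) < k := by exact_mod_cast hk0
        rw [abs_of_pos (by positivity), div_le_iff₀ hσ₀R]
        have := hkR.trans hnle
        rw [le_div_iff₀ hNR] at this
        nlinarith [mul_pos hA0 hσ₀R]
      · have e : ((k : ℝ) * (q * s) + m * ((-j : ℤ) : ℝ)) * σ₀ - (k : ℝ) * N / σ₀
            = (m * σ₀) * (k * (((q * s : ℝ) * σ₀ - N / σ₀) / (m * σ₀)) - j) := by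
          push_cast
          field_simp
          ring
        rw [e, abs_mul, abs_of_pos (by positivity : (0:ℝ) < m * σ₀)]
        have h1 : (1:ℝ) / (n + 1) ≤ N / (A * σ₀) := by
          rw [div_le_div_iff₀ (by positivity) (by positivity)]
          rw [div_lt_iff₀ hNR] at hnlt
          nlinarith
        calc _ ≤ (m * σ₀) * (N / (A * σ₀)) := by
              gcongr
              exact hjk.trans h1
          _ = B := by
              field_simp
              linarith
          _ ≤ 2 * B := by linarith
    · refine ⟨0, 1, by simp, by simp; positivity, ?_⟩
      push Not at hX
      rw [div_lt_one hNR] at hX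
      have : (m:ℝ) * σ₀ ≤ B := by
        have : A * (m * σ₀) ≤ A * B := by rw [hAB]; nlinarith
        exact le_of_mul_le_mul_left this hA0
      simp only [Int.cast_zero, Int.cast_one, zero_mul, zero_div, mul_one, zero_add, sub_zero]
      rw [abs_of_pos (by positivity)]
      linarith
  obtain ⟨a, d, hne, h1, h2⟩ := key
  refine ⟨a, a * (q * s) + m * d, ?_, h1, by push_cast; exact h2, ?_, ?_⟩
  · rintro ⟨rfl, h⟩
    apply hne
    have : m ≠ 0 := hm.ne'
    simpa [this] using h
  · push_cast
    set b : ℝ := (a : ℝ) * (q * s) + m * d with hb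
    have hpR : (0:ℝ) < p := hσ₀R.trans_le hlow
    have hNR' : (N : ℝ) = p * q := by exact_mod_cast hNpq
    set y := b * σ₀ - (a : ℝ) * N / σ₀ with hy
    set x := (a : ℝ) * N / σ₀ with hx
    have hR : 4 * Real.sqrt N * Real.sqrt m / (m₀ : ℝ) ^ ((3 : ℝ) / 2) = 4 * B / m₀ := by
      have : (m₀ : ℝ) ^ ((3 : ℝ) / 2) = m₀ * Real.sqrt m₀ := by
        rw [show (3:ℝ)/2 = 1 + 1/2 by norm_num, Real.rpow_add hm₀R, Real.rpow_one,
          Real.sqrt_eq_rpow]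
      rw [this, hB, Real.sqrt_div (by positivity), Real.sqrt_mul (by positivity)]
      field_simp
    rw [hR]
    set t : ℝ := (p - σ₀) / σ₀ with ht
    have ht0 : 0 ≤ t := div_nonneg (by linarith) hσ₀R.le
    have ht1 : t ≤ 1 / m₀ := by
      rw [ht, div_le_iff₀ hσ₀R]; linarith
    set r : ℝ := (p - σ₀) / p with hr
    have hr0 : 0 ≤ r := div_nonneg (by linarith) hpR.le
    have hrt : r ≤ t := div_le_div_of_nonneg_left (by linarith) hσ₀R hlow
    have e : (a : ℝ) * q + b * p - (x + b * σ₀) = t * (y + x * r) := by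
      rw [ht, hr, hy, hx, hNR']
      field_simp
      ring
    rw [e, abs_mul, abs_of_nonneg ht0]
    have h3 : |y + x * r| ≤ 4 * B := by
      calc |y + x * r| ≤ |y| + |x * r| := abs_add_le _ _
        _ = |y| + |x| * r := by rw [abs_mul, abs_of_nonneg hr0]
        _ ≤ 2 * B + (2 * A) * (1 / m₀) := by
            gcongr
            exact hrt.trans ht1
        _ = 4 * B := by rw [hABm]; field_simp; norm_num
    calc t * |y + x * r| ≤ 1 / m₀ * (4 * B) := by gcongr
      _ = _ := by ring
  · intro σ' hσ'
    obtain ⟨k, hk⟩ := hcong.symm.dvd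
    obtain ⟨l, hl⟩ := hσ'.symm.dvd
    have hp' : (p : ℤ) = σ + m * k := by linarith
    have hNZ : (N : ℤ) = p * q := by exact_mod_cast hNpq
    -- s and σ' agree modulo m
    obtain ⟨w, hw⟩ : (m : ℤ) ∣ s - σ' := by
      refine ⟨-(s * m * l) - v * σ', ?_⟩
      linear_combination (-s) * hl + σ' * hsv
    apply Int.ModEq.symm
    rw [Int.modEq_iff_dvd, hNZ]
    refine ⟨-(a * q * l) + k * (a * q * w + d), ?_⟩
    rw [hp']
    linear_combination (-a * q) * hl + m * k * a * q * hw
end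

section
/- Let N, m, m₀, σ₀ be positive integers and let σ be an integer with gcd(σ, m) = 1. Then there exist integers a, b, not both zero, such that a·N ≡ b·σ² (mod m), |a·N/σ₀| ≤ 2·(N·m·m₀)^{1/2}, and |b·σ₀ − a·N/σ₀| ≤ 2·(N·m/m₀)^{1/2}, where the two inequalities are inequalities of real numbers. -/
/-- Existence of a short nonzero vector in the lattice of solutions of
`a·N ≡ b·σ² (mod m)`. -/
theorem stmt_1
    (N m m₀ σ₀ : ℕ) (σ : ℤ)
    (hN : 0 < N) (hm : 0 < m) (hm₀ : 0 < m₀) (hσ₀ : 0 < σ₀)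
    (hσcop : IsCoprime σ (m : ℤ)) :
    ∃ a b : ℤ, ¬ (a = 0 ∧ b = 0) ∧
      Int.ModEq (m : ℤ) (a * N) (b * σ ^ 2) ∧
      |(a : ℝ) * N / σ₀| ≤ 2 * Real.sqrt ((N : ℝ) * m * m₀) ∧
      |(b : ℝ) * σ₀ - (a : ℝ) * N / σ₀| ≤ 2 * Real.sqrt ((N : ℝ) * m / m₀) := by
  have hN' : (0 : ℝ) < N := by exact_mod_cast hN
  have hm' : (0 : ℝ) < m := by exact_mod_cast hm
  have hm₀' : (0 : ℝ) < m₀ := by exact_mod_cast hm₀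
  have hs : (0 : ℝ) < σ₀ := by exact_mod_cast hσ₀
  obtain ⟨u, v, huv⟩ := hσcop.pow_left (m := 2)
  have hXY : Real.sqrt ((N : ℝ) * m * m₀) * Real.sqrt ((N : ℝ) * m / m₀) = N * m := by
    rw [← Real.sqrt_mul (by positivity)]
    rw [show (N : ℝ) * m * m₀ * (N * m / m₀) = (N * m) ^ 2 by field_simp]
    exact Real.sqrt_sq (by positivity)
  have hX : 0 < Real.sqrt ((N : ℝ) * m * m₀) := by positivity
  have hY : 0 < Real.sqrt ((N : ℝ) * m / m₀) := by positivity
  generalize Real.sqrt ((N : ℝ) * m * m₀) = X at *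
  generalize Real.sqrt ((N : ℝ) * m / m₀) = Y at *
  -- key: a lower bound on `B` gives the second inequality
  have key : ∀ B : ℝ, 2 * X * σ₀ / N ≤ B * 4 → σ₀ * m ≤ 2 * Y * B := by
    intro B hB
    rw [div_le_iff₀ hN'] at hB
    have h1 : 2 * X * σ₀ * Y ≤ B * 4 * N * Y := mul_le_mul_of_nonneg_right hB hY.le
    have h2 : N * (σ₀ * m) ≤ N * (2 * Y * B) := by
      have : 2 * X * σ₀ * Y = 2 * σ₀ * (N * m) := by rw [← hXY]; ring
      linarith
    exact le_of_mul_le_mul_left h2 hN'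
  by_cases hA : 2 * X * σ₀ / N < 1
  · refine ⟨0, m, ?_, ?_, ?_, ?_⟩
    · rintro ⟨-, h⟩
      omega
    · exact (Int.modEq_iff_dvd).2 ⟨σ ^ 2, by ring⟩
    · simp [hX.le]
    · have := key 1 (by linarith)
      simp only [Int.cast_natCast, Int.cast_zero, zero_mul, zero_div, sub_zero]
      rw [abs_of_pos (by positivity)]
      linarith
  · push Not at hA
    have hn : 0 < ⌊2 * X * σ₀ / N⌋₊ := Nat.floor_pos.2 hA
    have hle := Nat.floor_le (show 0 ≤ 2 * X * σ₀ / N by positivity)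
    have hlt := Nat.lt_floor_add_one (2 * X * σ₀ / N)
    generalize ⌊2 * X * σ₀ / N⌋₊ = n at *
    obtain ⟨j, a, ha, han, hj⟩ := Real.exists_int_int_abs_mul_sub_le
      (((N * u : ℤ) * σ₀ - N / σ₀) / (σ₀ * m) : ℝ) hn
    refine ⟨a, N * u * a - m * j, fun h => ha.ne' h.1, ?_, ?_, ?_⟩
    · exact (Int.modEq_iff_dvd).2 ⟨-a * N * v - j * σ ^ 2, by linear_combination (a * N) * huv⟩
    · have ha' : (0 : ℝ) < a := by exact_mod_cast ha
      have han' : (a : ℝ) ≤ n := by exact_mod_cast han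
      rw [abs_of_pos (by positivity), div_le_iff₀ hs, ← le_div_iff₀ hN']
      linarith
    · have e : (((N * u * a - m * j : ℤ) : ℝ) * σ₀ - a * N / σ₀)
          = (σ₀ * m) * (a * (((N * u : ℤ) * σ₀ - N / σ₀) / (σ₀ * m)) - j) := by
        push_cast
        field_simp
        ring
      rw [e, abs_mul, abs_of_pos (by positivity : (0 : ℝ) < σ₀ * m)]
      have hp : (0 : ℝ) < n + 1 := by positivity
      calc _ ≤ (σ₀ * m : ℝ) * (1 / (n + 1)) := mul_le_mul_of_nonneg_left hj (by positivity)
        _ ≤ _ := by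
          rw [mul_one_div, div_le_iff₀ hp]
          exact key _ (by linarith)
end

section
/- Let N, m₀, σ₀, p, q be positive integers with N = p·q and σ₀ ≤ p < (1 + 1/m₀)·σ₀ (as real numbers). Then for all real numbers a and b, |a·q + b·p − (a·N/σ₀ + b·σ₀)| ≤ (1/m₀)·|b·σ₀ − a·N/σ₀| + (1/m₀²)·|a|·N/σ₀. -/
/-- The approximation step in the proof of Proposition 3.2. -/
theorem stmt_2
    (N m₀ σ₀ p q : ℕ)
    (hN : 0 < N) (hm₀ : 0 < m₀) (hσ₀ : 0 < σ₀) (hp : 0 < p) (hq : 0 < q)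
    (hNpq : N = p * q)
    (hlow : (σ₀ : ℝ) ≤ (p : ℝ))
    (hhigh : (p : ℝ) < (1 + 1 / (m₀ : ℝ)) * (σ₀ : ℝ)) :
    ∀ a b : ℝ,
      |a * q + b * p - (a * N / σ₀ + b * σ₀)|
        ≤ (1 / (m₀ : ℝ)) * |b * σ₀ - a * N / σ₀| + (1 / (m₀ : ℝ) ^ 2) * |a| * N / σ₀ := by
  intro a b
  have hs : (0 : ℝ) < σ₀ := by exact_mod_cast hσ₀
  have hm : (0 : ℝ) < m₀ := by exact_mod_cast hm₀
  have hq' : (0 : ℝ) < q := by exact_mod_cast hq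
  have hNr : (N : ℝ) = p * q := by exact_mod_cast hNpq
  obtain ⟨t, ht⟩ : ∃ t : ℝ, t = p / σ₀ - 1 := ⟨_, rfl⟩
  have hpt : (p : ℝ) = σ₀ * (1 + t) := by rw [ht]; field_simp; ring
  obtain ⟨u, hu⟩ : ∃ u : ℝ, u = 1 / (m₀ : ℝ) := ⟨_, rfl⟩
  have hu2 : 1 / (m₀ : ℝ) ^ 2 = u ^ 2 := by rw [hu]; ring
  have ht0 : 0 ≤ t := by
    rw [hpt] at hlow
    by_contra h
    push Not at h
    nlinarith
  have htu : t ≤ u := by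
    rw [hpt, ← hu] at hhigh
    by_contra h
    push Not at h
    nlinarith
  have hM : (N : ℝ) / σ₀ = (1 + t) * q := by rw [hNr, hpt]; field_simp
  rw [hu2, ← hu, mul_div_assoc a, mul_div_assoc (u ^ 2 * |a|), hM, hpt]
  have e : a * q + b * (σ₀ * (1 + t)) - (a * ((1 + t) * q) + b * σ₀)
      = t * (b * σ₀ - a * ((1 + t) * q)) + (t ^ 2 * q) * a := by ring
  rw [e]
  refine (abs_add_le _ _).trans ?_
  rw [abs_mul, abs_mul, abs_of_nonneg ht0, abs_of_nonneg (by positivity : 0 ≤ t ^ 2 * (q : ℝ))]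
  have h1 : t ^ 2 * (q : ℝ) ≤ u ^ 2 * ((1 + t) * q) := by
    have : (q : ℝ) ≤ (1 + t) * q := by nlinarith
    gcongr
  have h2 := mul_le_mul_of_nonneg_right h1 (abs_nonneg a)
  have h3 := mul_le_mul_of_nonneg_right htu (abs_nonneg (b * σ₀ - a * ((1 + t) * q)))
  linarith
end

section
/- Let m be a positive integer and let p, q, σ, σ', a, b be integers such that gcd(p·q, m) = 1, p ≡ σ (mod m), σ·σ' ≡ 1 (mod m²), and a·(p·q) ≡ b·σ² (mod m). Then a·q + b·p ≡ a·(p·q)·σ' + b·σ (mod m²). -/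
/-- The key congruence step in the proof of Proposition 3.2. -/
theorem stmt_3
    (m : ℕ) (hm : 0 < m)
    (p q σ σ' a b : ℤ)
    (hcop : IsCoprime (p * q) (m : ℤ))
    (hpσ : Int.ModEq (m : ℤ) p σ)
    (hσσ' : Int.ModEq ((m : ℤ) ^ 2) (σ * σ') 1)
    (hab : Int.ModEq (m : ℤ) (a * (p * q)) (b * σ ^ 2)) :
    Int.ModEq ((m : ℤ) ^ 2) (a * q + b * p) (a * (p * q) * σ' + b * σ) := by
  obtain ⟨k, h1⟩ := hpσ.dvd
  obtain ⟨l, h2⟩ := hσσ'.dvd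
  obtain ⟨n, h3⟩ := hab.dvd
  have hE : b - a * q * σ' = m * (σ' ^ 2 * (n - a * k * q)
      + m * l * (b * (1 + σ * σ') - a * q * σ')) := by
    linear_combination σ' ^ 2 * (h3 - a * q * h1) + (b * (1 + σ * σ') - a * q * σ') * h2
  apply Int.modEq_of_dvd
  refine ⟨-(a * q * l) + k * (σ' ^ 2 * (n - a * k * q)
      + m * l * (b * (1 + σ * σ') - a * q * σ')), ?_⟩
  linear_combination (b - a * q * σ') * h1 - a * q * h2 + m * k * hE
end

section
/- Let m₀ be a positive integer and define a sequence s : ℕ → ℕ by s(0) = 1 and s(k+1) = ⌈(1 + 1/m₀)·s(k)⌉ for all k ≥ 0, where the ceiling is of the real number (1 + 1/m₀)·s(k). Then for every positive integer p there exists exactly one index k ≥ 0 such that s(k) ≤ p and p < (1 + 1/m₀)·s(k) as real numbers. -/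
/-- The intervals `[s k, (1 + 1/m₀)·s k)` are disjoint and cover the positive
integers. -/
theorem stmt_11
    (m₀ : ℕ) (hm₀ : 0 < m₀)
    (s : ℕ → ℕ) (hs0 : s 0 = 1)
    (hs : ∀ k, s (k + 1) = ⌈(1 + 1 / (m₀ : ℝ)) * (s k : ℝ)⌉₊) :
    ∀ p : ℕ, 0 < p →
      ∃! k : ℕ, s k ≤ p ∧ (p : ℝ) < (1 + 1 / (m₀ : ℝ)) * (s k : ℝ) := by
  have key : ∀ k (p : ℕ), (p : ℝ) < (1 + 1 / (m₀ : ℝ)) * (s k : ℝ) ↔ p < s (k + 1) := by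
    intro k p
    rw [hs, Nat.lt_ceil]
  have hm : (0 : ℝ) < 1 / (m₀ : ℝ) := by positivity
  have step : ∀ k, 0 < s k → s k < s (k + 1) := by
    intro k hk
    rw [← key]
    have hk' : (0 : ℝ) < (s k : ℝ) := by exact_mod_cast hk
    nlinarith [mul_pos hm hk']
  have pos : ∀ k, 0 < s k := by
    intro k
    induction k with
    | zero => omega
    | succ n ih => have := step n ih; omega
  have mono : StrictMono s := strictMono_nat_of_lt_succ fun k => step k (pos k)
  intro p hp
  simp only [key]
  have cover : ∀ n, p < s n → ∃ k, s k ≤ p ∧ p < s (k + 1) := by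
    intro n
    induction n with
    | zero => intro h; omega
    | succ n ih =>
      intro h
      by_cases h' : p < s n
      · exact ih h'
      · exact ⟨n, not_lt.mp h', h⟩
  obtain ⟨k, h1, h2⟩ := cover (p + 1) (lt_of_lt_of_le (Nat.lt_succ_self p) (mono.le_apply))
  refine ⟨k, ⟨h1, h2⟩, ?_⟩
  rintro j ⟨h3, h4⟩
  have a : j < k + 1 := mono.lt_iff_lt.mp (lt_of_le_of_lt h3 h2)
  have b : k < j + 1 := mono.lt_iff_lt.mp (lt_of_le_of_lt h1 h4)
  omega
end
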